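/- D is a *-super SH domain (i.e., for every nonzero nonunit x of D, xD is expressible as a *-product of finitely many *-super homogeneous ideals) if and only if D is a *-independent ring of Krull type (*-IRKT). -/

import Mathlib

open scoped nonZeroDivisors

/-- A star operation on the nonzero fractional ideals of an integral domain `D`
with quotient field `K`: it fixes nonzero principal fractional ideals, commutes with
multiplication by nonzero principal fractional ideals, is extensive, monotone and
idempotent (on nonzero fractional ideals). -/
structure StarOperation (D K : Type*) [CommRing D] [IsDomain D] [Field K]
    [Algebra D K] [IsFractionRing D K] where
  star : FractionalIdeal D⁰ K → FractionalIdeal D⁰ K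
  star_spanSingleton : ∀ x : K, x ≠ 0 →
    star (FractionalIdeal.spanSingleton D⁰ x) = FractionalIdeal.spanSingleton D⁰ x
  star_smul : ∀ (x : K) (I : FractionalIdeal D⁰ K), x ≠ 0 → I ≠ 0 →
    star (FractionalIdeal.spanSingleton D⁰ x * I) = FractionalIdeal.spanSingleton D⁰ x * star I
  le_star : ∀ I : FractionalIdeal D⁰ K, I ≠ 0 → I ≤ star I
  star_mono : ∀ I J : FractionalIdeal D⁰ K, I ≠ 0 → J ≠ 0 → I ≤ J → star I ≤ star J
  star_idem : ∀ I : FractionalIdeal D⁰ K, I ≠ 0 → star (star I) = star I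

namespace StarOperation

variable {D K : Type*} [CommRing D] [IsDomain D] [Field K] [Algebra D K] [IsFractionRing D K]
variable (s : StarOperation D K)

/-- `*` has finite character: for every nonzero fractional ideal `I`, `I^*` is the union
of `J^*` over the nonzero finitely generated fractional subideals `J` of `I`. -/
def FiniteCharacter : Prop :=
  ∀ I : FractionalIdeal D⁰ K, I ≠ 0 → ∀ x ∈ s.star I,
    ∃ J : FractionalIdeal D⁰ K, J ≠ 0 ∧ (J : Submodule D K).FG ∧ J ≤ I ∧ x ∈ s.star J

/-- A (nonzero) integral ideal `I` of `D` is a `*`-ideal if `I^* = I`. -/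
def IsStarIdeal (I : Ideal D) : Prop :=
  I ≠ ⊥ ∧ s.star (I : FractionalIdeal D⁰ K) = (I : FractionalIdeal D⁰ K)

/-- An integral ideal `I` of `D` is a `*`-ideal of finite type if `I = J^*` for some
nonzero finitely generated ideal `J`. -/
def IsFiniteTypeStarIdeal (I : Ideal D) : Prop :=
  ∃ J : Ideal D, J ≠ ⊥ ∧ J.FG ∧
    s.star (J : FractionalIdeal D⁰ K) = (I : FractionalIdeal D⁰ K)

/-- A maximal `*`-ideal: maximal among proper integral `*`-ideals. -/
def IsMaxStarIdeal (M : Ideal D) : Prop :=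
  M ≠ ⊤ ∧ s.IsStarIdeal M ∧ ∀ J : Ideal D, J ≠ ⊤ → s.IsStarIdeal J → M ≤ J → J = M

/-- `I` is `*`-homogeneous: a proper `*`-ideal of finite type such that `(J + J')^* ≠ D`
for every pair `J`, `J'` of proper `*`-ideals of finite type containing `I`. -/
def IsHomog (I : Ideal D) : Prop :=
  I ≠ ⊤ ∧ s.IsStarIdeal I ∧ s.IsFiniteTypeStarIdeal I ∧
    ∀ J J' : Ideal D, J ≠ ⊤ → J' ≠ ⊤ → s.IsStarIdeal J → s.IsStarIdeal J' →
      s.IsFiniteTypeStarIdeal J → s.IsFiniteTypeStarIdeal J' → I ≤ J → I ≤ J' →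
      s.star ((J + J' : Ideal D) : FractionalIdeal D⁰ K) ≠ 1

/-- The set `M(I) = {x ∈ D : (xD + I)^* ≠ D}` attached to an ideal `I`. -/
def MSet (I : Ideal D) : Set D :=
  {x : D | s.star ((Ideal.span {x} + I : Ideal D) : FractionalIdeal D⁰ K) ≠ 1}

/-- `A` and `B` are `*`-comaximal if `(A + B)^* = D`. -/
def StarComaximal (A B : Ideal D) : Prop :=
  s.star ((A + B : Ideal D) : FractionalIdeal D⁰ K) = 1

/-- An integral ideal `I` is `*`-invertible if `(I · I⁻¹)^* = D`. -/
def StarInvertible (I : Ideal D) : Prop :=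
  s.star ((I : FractionalIdeal D⁰ K) * (I : FractionalIdeal D⁰ K)⁻¹) = 1

/-- `D` is a `*`-SH domain: every principal ideal generated by a nonzero nonunit is a
`*`-product of finitely many `*`-homogeneous ideals. -/
def IsSHDomain : Prop :=
  ∀ x : D, x ≠ 0 → ¬IsUnit x →
    ∃ T : Multiset (Ideal D), (∀ J ∈ T, s.IsHomog J) ∧
      s.star ((T.prod : Ideal D) : FractionalIdeal D⁰ K) =
        ((Ideal.span {x} : Ideal D) : FractionalIdeal D⁰ K)

/-- `D` has finite `*`-character: every nonzero nonunit lies in only finitely many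
maximal `*`-ideals. -/
def FiniteStarCharacter : Prop :=
  ∀ x : D, x ≠ 0 → ¬IsUnit x → {P : Ideal D | s.IsMaxStarIdeal P ∧ x ∈ P}.Finite

end StarOperation

namespace StarOperation

variable {D K : Type*} [CommRing D] [IsDomain D] [Field K] [Algebra D K] [IsFractionRing D K]

/-- A `*`-homogeneous ideal `I` is `*`-super homogeneous if every `*`-ideal of finite
type containing `I` is `*`-invertible. -/
def IsSuperHomog (s : StarOperation D K) (I : Ideal D) : Prop :=
  s.IsHomog I ∧ ∀ J : Ideal D, s.IsStarIdeal J → s.IsFiniteTypeStarIdeal J → I ≤ J →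
    s.StarInvertible J

/-- `D` is a `*`-independent ring of Krull type: localizations at maximal `*`-ideals are
valuation domains, `D` is the locally finite intersection of these localizations (inside
`K`), and no two distinct maximal `*`-ideals contain a common nonzero prime ideal. -/
def IsIRKT (s : StarOperation D K) : Prop :=
  (∀ (P : Ideal D) [P.IsPrime], s.IsMaxStarIdeal P →
    ValuationRing (Localization.AtPrime P)) ∧
  (∀ x : K, (∀ P : Ideal D, s.IsMaxStarIdeal P →
      ∃ a t : D, t ∉ P ∧ x * algebraMap D K t = algebraMap D K a) →
    ∃ d : D, algebraMap D K d = x) ∧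
  s.FiniteStarCharacter ∧
  (∀ P Q : Ideal D, s.IsMaxStarIdeal P → s.IsMaxStarIdeal Q → P ≠ Q →
    ∀ L : Ideal D, L.IsPrime → L ≠ ⊥ → ¬(L ≤ P ⊓ Q))

end StarOperation

namespace StarOperation

section Aux

variable {D K : Type*} [CommRing D] [IsDomain D] [Field K] [Algebra D K] [IsFractionRing D K]
variable (s : StarOperation D K)

/-- The ideal-level closure. -/
def cl (I : Ideal D) : Ideal D :=
  ((s.star (I : FractionalIdeal D⁰ K) : FractionalIdeal D⁰ K) : Submodule D K).comap
    (Algebra.linearMap D K)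

theorem mem_cl {I : Ideal D} {d : D} :
    d ∈ s.cl I ↔ algebraMap D K d ∈ s.star (I : FractionalIdeal D⁰ K) := Iff.rfl

theorem coe_ne {I : Ideal D} (h : I ≠ ⊥) : (I : FractionalIdeal D⁰ K) ≠ 0 := by
  simpa [FractionalIdeal.coeIdeal_eq_zero] using h

theorem star_one : s.star 1 = 1 := by
  have := s.star_spanSingleton 1 one_ne_zero
  simpa using this

theorem coe_cl {I : Ideal D} (h : I ≠ ⊥) :
    ((s.cl I : Ideal D) : FractionalIdeal D⁰ K) = s.star (I : FractionalIdeal D⁰ K) := by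
  have h1 : s.star (I : FractionalIdeal D⁰ K) ≤ 1 := by
    rw [← s.star_one]
    exact s.star_mono _ _ (coe_ne h) one_ne_zero FractionalIdeal.coeIdeal_le_one
  ext x
  rw [FractionalIdeal.mem_coeIdeal]
  constructor
  · rintro ⟨d, hd, rfl⟩
    exact hd
  · intro hx
    obtain ⟨d, rfl⟩ := (FractionalIdeal.mem_one_iff D⁰).1 (h1 hx)
    exact ⟨d, hx, rfl⟩

theorem le_cl {I : Ideal D} (h : I ≠ ⊥) : I ≤ s.cl I := fun d hd =>
  s.le_star _ (coe_ne h) (FractionalIdeal.mem_coeIdeal_of_mem D⁰ hd)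

theorem cl_ne {I : Ideal D} (h : I ≠ ⊥) : s.cl I ≠ ⊥ := fun h' =>
  h (le_bot_iff.1 (h' ▸ s.le_cl h))

theorem cl_mono {I J : Ideal D} (h : I ≠ ⊥) (hIJ : I ≤ J) : s.cl I ≤ s.cl J := fun d hd =>
  s.star_mono _ _ (coe_ne h) (coe_ne (fun h' => h (le_bot_iff.1 (h' ▸ hIJ))))
    ((FractionalIdeal.coeIdeal_le_coeIdeal K).2 hIJ) hd

theorem cl_idem {I : Ideal D} (h : I ≠ ⊥) : s.cl (s.cl I) = s.cl I := by
  ext d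
  rw [mem_cl, coe_cl s h, s.star_idem _ (coe_ne h), mem_cl]

theorem cl_le {I J : Ideal D} (h : I ≠ ⊥) (hJ : s.cl J = J) (hIJ : I ≤ J) : s.cl I ≤ J :=
  hJ ▸ s.cl_mono h hIJ

theorem cl_top : s.cl (⊤ : Ideal D) = ⊤ := top_le_iff.1 (s.le_cl top_ne_bot)

theorem star_eq_iff {I J : Ideal D} (h : I ≠ ⊥) :
    s.star (I : FractionalIdeal D⁰ K) = (J : FractionalIdeal D⁰ K) ↔ s.cl I = J := by
  rw [← coe_cl s h, FractionalIdeal.coeIdeal_inj]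

theorem star_eq_one_iff {I : Ideal D} (h : I ≠ ⊥) :
    s.star (I : FractionalIdeal D⁰ K) = 1 ↔ s.cl I = ⊤ := by
  rw [← star_eq_iff s h, FractionalIdeal.coeIdeal_top]

theorem isStar_iff {I : Ideal D} : s.IsStarIdeal I ↔ I ≠ ⊥ ∧ s.cl I = I :=
  ⟨fun h => ⟨h.1, (star_eq_iff s h.1).1 h.2⟩, fun h => ⟨h.1, (star_eq_iff s h.1).2 h.2⟩⟩

theorem isStar_cl {I : Ideal D} (h : I ≠ ⊥) : s.IsStarIdeal (s.cl I) :=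
  (isStar_iff s).2 ⟨s.cl_ne h, s.cl_idem h⟩

theorem ft_iff {I : Ideal D} : s.IsFiniteTypeStarIdeal I ↔ ∃ J : Ideal D, J ≠ ⊥ ∧ J.FG ∧ s.cl J = I := by
  refine exists_congr fun J => and_congr_right fun h => and_congr_right fun _ => star_eq_iff s h

theorem cl_span {x : D} (hx : x ≠ 0) : s.cl (Ideal.span {x}) = Ideal.span {x} := by
  rw [← star_eq_iff s (by simpa using hx), FractionalIdeal.coeIdeal_span_singleton]
  exact s.star_spanSingleton _ (by simpa using hx)

theorem ne_bot_of_mem {I : Ideal D} {x : D} (h : x ∈ I) (hx : x ≠ 0) : I ≠ ⊥ := fun h' =>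
  hx (by simpa [h'] using h)

theorem mul_cl {I J : Ideal D} (hI : I ≠ ⊥) (hJ : J ≠ ⊥) (x : K)
    (h : ∀ i ∈ I, ∃ j ∈ J, x * algebraMap D K i = algebraMap D K j) :
    ∀ i ∈ s.cl I, ∃ j ∈ s.cl J, x * algebraMap D K i = algebraMap D K j := by
  intro i hi
  by_cases hx : x = 0
  · exact ⟨0, zero_mem _, by simp [hx]⟩
  have h1 : FractionalIdeal.spanSingleton D⁰ x * (I : FractionalIdeal D⁰ K) ≤ J := by
    intro y hy
    obtain ⟨z, hz, rfl⟩ := FractionalIdeal.mem_singleton_mul.1 hy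
    obtain ⟨i, hi, rfl⟩ := (FractionalIdeal.mem_coeIdeal _).1 hz
    obtain ⟨j, hj, e⟩ := h i hi
    rw [e]
    exact FractionalIdeal.mem_coeIdeal_of_mem D⁰ hj
  have hne : FractionalIdeal.spanSingleton D⁰ x * (I : FractionalIdeal D⁰ K) ≠ 0 := by
    intro h0
    apply coe_ne (K := K) hI
    have e : FractionalIdeal.spanSingleton D⁰ x⁻¹ *
        (FractionalIdeal.spanSingleton D⁰ x * (I : FractionalIdeal D⁰ K)) = I := by
      rw [← mul_assoc, FractionalIdeal.spanSingleton_mul_spanSingleton, inv_mul_cancel₀ hx,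
        FractionalIdeal.spanSingleton_one, one_mul]
    rw [← e, h0, mul_zero]
  have h2 := s.star_mono _ _ hne (coe_ne hJ) h1
  rw [s.star_smul x _ hx (coe_ne hI), ← coe_cl s hI, ← coe_cl s hJ] at h2
  have h3 := h2 (FractionalIdeal.mem_singleton_mul.2
    ⟨_, FractionalIdeal.mem_coeIdeal_of_mem D⁰ hi, rfl⟩)
  obtain ⟨j, hj, e⟩ := (FractionalIdeal.mem_coeIdeal _).1 h3
  exact ⟨j, hj, e.symm⟩

theorem mul_cl' {I J : Ideal D} (hI : I ≠ ⊥) (hJ : J ≠ ⊥) (x : D)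
    (h : ∀ i ∈ I, x * i ∈ J) : ∀ i ∈ s.cl I, x * i ∈ s.cl J := by
  intro i hi
  obtain ⟨j, hj, e⟩ := s.mul_cl hI hJ (algebraMap D K x)
    (fun i hi => ⟨_, h i hi, by simp⟩) i hi
  rw [← map_mul] at e
  rwa [IsFractionRing.injective D K e]

variable {s}

theorem fin_cl (hs : s.FiniteCharacter) {I : Ideal D} (hI : I ≠ ⊥) {x : D} (hx : x ∈ s.cl I) :
    ∃ J : Ideal D, J ≠ ⊥ ∧ J.FG ∧ J ≤ I ∧ x ∈ s.cl J := by
  obtain ⟨J, hJ0, hJ, hJI, hxJ⟩ := hs I (coe_ne hI) _ hx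
  obtain ⟨J', rfl⟩ := FractionalIdeal.le_one_iff_exists_coeIdeal.1
    (hJI.trans FractionalIdeal.coeIdeal_le_one)
  refine ⟨J', ?_, ?_, (FractionalIdeal.coeIdeal_le_coeIdeal K).1 hJI, hxJ⟩
  · rintro rfl
    simp at hJ0
  · exact (FractionalIdeal.coeIdeal_fg D⁰ (IsFractionRing.injective D K) J').1 hJ

theorem exists_max (hs : s.FiniteCharacter) {I : Ideal D} (hI : I ≠ ⊥) (h : s.cl I ≠ ⊤) :
    ∃ P, s.IsMaxStarIdeal P ∧ I ≤ P := by
  obtain ⟨M, hIM, hM⟩ := zorn_le_nonempty₀ {J : Ideal D | J ≠ ⊤ ∧ s.IsStarIdeal J} (by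
    intro c hc hch y hy
    have hd : DirectedOn (· ≤ ·) c := hch.directedOn
    have hne : sSup c ≠ ⊥ := fun h' => (hc hy).2.1 (le_bot_iff.1 (h' ▸ le_sSup hy))
    have key : ∀ x ∈ s.cl (sSup c), ∃ J ∈ c, x ∈ J := by
      intro x hx
      obtain ⟨F, hF0, hF, hFle, hxF⟩ := fin_cl hs hne hx
      have : ∃ J ∈ c, F ≤ J := by
        have := (CompleteLattice.isCompactElement_iff_le_of_directed_sSup_le (Ideal D) F).1
          ((Submodule.fg_iff_compact F).1 hF) c ⟨y, hy⟩ hd hFle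
        exact this
      obtain ⟨J, hJ, hFJ⟩ := this
      exact ⟨J, hJ, s.cl_le hF0 ((isStar_iff s).1 (hc hJ).2).2 hFJ hxF⟩
    refine ⟨sSup c, ⟨?_, (isStar_iff s).2 ⟨hne, ?_⟩⟩, fun z hz => le_sSup hz⟩
    · intro h'
      obtain ⟨J, hJ, h1⟩ := key 1 (by rw [h', s.cl_top]; trivial)
      exact (hc hJ).1 ((Ideal.eq_top_iff_one _).2 h1)
    · refine le_antisymm ?_ (s.le_cl hne)
      intro x hx
      obtain ⟨J, hJ, h1⟩ := key x hx
      exact le_sSup hJ h1) (s.cl I) ⟨h, s.isStar_cl hI⟩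
  refine ⟨M, ⟨hM.1.1, hM.1.2, fun J h1 h2 h3 => ?_⟩, (s.le_cl hI).trans hIM⟩
  exact le_antisymm (hM.2 ⟨h1, h2⟩ h3) h3

theorem cl_top_iff (hs : s.FiniteCharacter) {I : Ideal D} (hI : I ≠ ⊥) :
    s.cl I = ⊤ ↔ ∀ P, s.IsMaxStarIdeal P → ¬ I ≤ P := by
  constructor
  · intro h P hP hIP
    have := s.cl_le hI ((isStar_iff s).1 hP.2.1).2 hIP
    exact hP.1 (top_le_iff.1 (h ▸ this))
  · intro h
    by_contra h'
    obtain ⟨P, hP, hIP⟩ := exists_max hs hI h'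
    exact h P hP hIP

theorem max_cl {P : Ideal D} (hP : s.IsMaxStarIdeal P) : s.cl P = P :=
  ((isStar_iff s).1 hP.2.1).2

theorem max_sup {P I : Ideal D} (hP : s.IsMaxStarIdeal P) (h : ¬ I ≤ P) : s.cl (P ⊔ I) = ⊤ := by
  by_contra h'
  have hne : P ⊔ I ≠ ⊥ := fun h => hP.2.1.1 (le_bot_iff.1 (h ▸ le_sup_left))
  have := hP.2.2 _ h' (s.isStar_cl hne) (le_sup_left.trans (s.le_cl hne))
  exact h (this ▸ le_sup_right.trans (s.le_cl hne))

theorem max_prime {P : Ideal D} (hP : s.IsMaxStarIdeal P) : P.IsPrime := by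
  refine ⟨hP.1, ?_⟩
  intro a b hab
  by_contra hcon
  push Not at hcon
  have h1 := max_sup hP (I := Ideal.span {a}) (by simpa [Ideal.span_le] using hcon.1)
  have hne : P ⊔ Ideal.span {a} ≠ ⊥ := fun h => hP.2.1.1 (le_bot_iff.1 (h ▸ le_sup_left))
  have := s.mul_cl' hne hP.2.1.1 b (by
    intro i hi
    obtain ⟨p, hp, q, hq, rfl⟩ := Submodule.mem_sup.1 hi
    obtain ⟨r, rfl⟩ := Ideal.mem_span_singleton'.1 hq
    rw [mul_add]
    refine add_mem (P.mul_mem_left _ hp) ?_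
    have : b * (r * a) = r * (a * b) := by ring
    rw [this]
    exact P.mul_mem_left _ hab) 1 (by rw [h1]; trivial)
  rw [max_cl hP, mul_one] at this
  exact hcon.2 this

/-- local membership implies closure membership -/
theorem mem_cl_of_local (hs : s.FiniteCharacter) {I : Ideal D} (hI : I ≠ ⊥) {d : D}
    (h : ∀ P, s.IsMaxStarIdeal P → ∃ t, t ∉ P ∧ t * d ∈ I) : d ∈ s.cl I := by
  let C : Ideal D := Submodule.comap (LinearMap.mulRight D d) I
  have hC : ∀ t, t ∈ C ↔ t * d ∈ I := fun t => Iff.rfl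
  have hIC : I ≤ C := fun i hi => (hC i).2 (I.mul_mem_right _ hi)
  have hC0 : C ≠ ⊥ := fun h => hI (le_bot_iff.1 (h ▸ hIC))
  have h1 : s.cl C = ⊤ := (cl_top_iff hs hC0).2 fun P hP hle => by
    obtain ⟨t, ht, htd⟩ := h P hP
    exact ht (hle ((hC t).2 htd))
  have := s.mul_cl' hC0 hI d (fun i hi => by rw [mul_comm]; exact hi) 1 (by rw [h1]; trivial)
  simpa using this

theorem inter_eq (hs : s.FiniteCharacter) (x : K) (h : ∀ P : Ideal D, s.IsMaxStarIdeal P →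
      ∃ a t : D, t ∉ P ∧ x * algebraMap D K t = algebraMap D K a) :
    ∃ d : D, algebraMap D K d = x := by
  let C : Ideal D := Submodule.comap ((LinearMap.mulLeft D x).comp (Algebra.linearMap D K))
    (1 : Submodule D K)
  have hC : ∀ t, t ∈ C ↔ ∃ a, x * algebraMap D K t = algebraMap D K a := fun t => by
    simp only [C, Submodule.mem_comap, Submodule.mem_one]
    simp [eq_comm]
  have hC0 : C ≠ ⊥ := by
    obtain ⟨a, b, hb, rfl⟩ := IsFractionRing.div_surjective (A := D) x
    have hb0 := nonZeroDivisors.ne_zero hb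
    refine ne_bot_of_mem (x := b) ((hC b).2 ⟨a, ?_⟩) hb0
    have : algebraMap D K b ≠ 0 := by simpa using hb0
    field_simp
  have h1 : s.cl C = ⊤ := (cl_top_iff hs hC0).2 fun P hP hle => by
    obtain ⟨a, t, ht, htd⟩ := h P hP
    exact ht (hle ((hC t).2 ⟨a, htd⟩))
  obtain ⟨j, -, e⟩ := s.mul_cl hC0 (top_ne_bot) x
    (fun i hi => by obtain ⟨a, ha⟩ := (hC i).1 hi; exact ⟨a, trivial, ha⟩) 1 (by rw [h1]; trivial)
  exact ⟨j, by simpa using e.symm⟩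

theorem mem_inv {I : Ideal D} (hI : I ≠ ⊥) {k : K} :
    k ∈ (I : FractionalIdeal D⁰ K)⁻¹ ↔ ∀ a ∈ I, ∃ d, k * algebraMap D K a = algebraMap D K d := by
  rw [FractionalIdeal.mem_inv_iff (coe_ne hI)]
  constructor
  · intro h a ha
    obtain ⟨d, hd⟩ := (FractionalIdeal.mem_one_iff D⁰).1
      (h _ (FractionalIdeal.mem_coeIdeal_of_mem D⁰ ha))
    exact ⟨d, hd.symm⟩
  · intro h y hy
    obtain ⟨a, ha, rfl⟩ := (FractionalIdeal.mem_coeIdeal _).1 hy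
    obtain ⟨d, hd⟩ := h a ha
    exact (FractionalIdeal.mem_one_iff D⁰).2 ⟨d, hd.symm⟩

theorem inv_iff (hs : s.FiniteCharacter) {I : Ideal D} (hI : I ≠ ⊥) :
    s.StarInvertible I ↔ ∀ P, s.IsMaxStarIdeal P → ∃ i ∈ I, ∃ k : K,
      (∀ a ∈ I, ∃ d, k * algebraMap D K a = algebraMap D K d) ∧
      ∃ t, t ∉ P ∧ k * algebraMap D K i = algebraMap D K t := by
  have hle : (I : FractionalIdeal D⁰ K) * (I : FractionalIdeal D⁰ K)⁻¹ ≤ 1 :=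
    FractionalIdeal.mul_le.2 fun i hi k hk => by
      rw [mul_comm]
      exact (FractionalIdeal.mem_inv_iff (coe_ne hI)).1 hk i hi
  obtain ⟨E, hE⟩ := FractionalIdeal.le_one_iff_exists_coeIdeal.1 hle
  have hIE : I ≤ E := by
    rw [← FractionalIdeal.coeIdeal_le_coeIdeal K, hE]
    exact FractionalIdeal.le_self_mul_inv FractionalIdeal.coeIdeal_le_one
  have hE0 : E ≠ ⊥ := fun h => hI (le_bot_iff.1 (h ▸ hIE))
  rw [StarInvertible, ← hE, star_eq_one_iff s hE0, cl_top_iff hs hE0]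
  refine forall_congr' fun P => forall_congr' fun hP => ?_
  constructor
  · intro h
    by_contra hcon
    apply h
    rw [← FractionalIdeal.coeIdeal_le_coeIdeal K, hE, FractionalIdeal.mul_le]
    intro y hy k hk
    obtain ⟨i, hi, rfl⟩ := (FractionalIdeal.mem_coeIdeal _).1 hy
    rw [mem_inv hI] at hk
    obtain ⟨t, ht⟩ := hk i hi
    rw [mul_comm, ht]
    refine FractionalIdeal.mem_coeIdeal_of_mem D⁰ ?_
    by_contra htP
    exact hcon ⟨i, hi, k, hk, t, htP, ht⟩
  · rintro ⟨i, hi, k, hk, t, htP, ht⟩ hEP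
    apply htP
    apply hEP
    have : algebraMap D K t ∈ (E : FractionalIdeal D⁰ K) := by
      rw [hE, ← ht, mul_comm k]
      exact FractionalIdeal.mul_mem_mul (FractionalIdeal.mem_coeIdeal_of_mem D⁰ hi)
        ((mem_inv hI).2 hk)
    obtain ⟨t', h', e⟩ := (FractionalIdeal.mem_coeIdeal _).1 this
    rwa [← IsFractionRing.injective D K e]

/-- if `cl F` is star invertible then it is locally principal, generated by an element of `F` -/
theorem loc_gen (hs : s.FiniteCharacter) {F : Ideal D} (hF : F ≠ ⊥)
    (h : s.StarInvertible (s.cl F)) {P : Ideal D} (hP : s.IsMaxStarIdeal P) :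
    ∃ j ∈ F, ∀ i ∈ s.cl F, ∃ t, t ∉ P ∧ j ∣ t * i := by
  obtain ⟨i, hi, k, hk, t, htP, ht⟩ := (inv_iff hs (s.cl_ne hF)).1 h P hP
  have : ∃ f ∈ F, ∃ t, t ∉ P ∧ k * algebraMap D K f = algebraMap D K t := by
    by_contra hcon
    push Not at hcon
    obtain ⟨j, hj, e⟩ := s.mul_cl hF hP.2.1.1 k (fun f hf => by
      obtain ⟨d, hd⟩ := hk f (s.le_cl hF hf)
      refine ⟨d, ?_, hd⟩
      by_contra hdP
      exact hcon f hf d hdP hd) i hi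
    rw [max_cl hP] at hj
    rw [ht] at e
    rw [IsFractionRing.injective D K e] at htP
    exact htP hj
  obtain ⟨f, hf, t, htP, ht⟩ := this
  refine ⟨f, hf, fun i hi => ⟨t, htP, ?_⟩⟩
  obtain ⟨d, hd⟩ := hk i hi
  refine ⟨d, IsFractionRing.injective D K ?_⟩
  rw [map_mul, map_mul, ← ht, ← hd]
  ring

theorem homog_unique (hs : s.FiniteCharacter) {A : Ideal D} (hA : s.IsHomog A) {P Q : Ideal D}
    (hP : s.IsMaxStarIdeal P) (hQ : s.IsMaxStarIdeal Q) (hAP : A ≤ P) (hAQ : A ≤ Q) : P = Q := by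
  by_contra hne
  have hQP : ¬ Q ≤ P := fun h => hne (hQ.2.2 P hP.1 hP.2.1 h)
  have h1 := max_sup hP hQP
  have hne' : P ⊔ Q ≠ ⊥ := fun h => hP.2.1.1 (le_bot_iff.1 (h ▸ le_sup_left))
  obtain ⟨F, hF0, hF, hFle, h1F⟩ := fin_cl hs hne' (x := 1) (by rw [h1]; trivial)
  obtain ⟨hA1, hA2, hA3, hA4⟩ := hA
  obtain ⟨A0, hA00, hA0, rfl⟩ := (ft_iff s).1 hA3
  have : ∃ F1 F2 : Ideal D, F1.FG ∧ F2.FG ∧ F1 ≤ P ∧ F2 ≤ Q ∧ F ≤ F1 ⊔ F2 := by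
    clear h1F hF0
    induction F, hF using Submodule.fg_induction with
    | singleton x =>
      obtain ⟨p, hp, q, hq, e⟩ := Submodule.mem_sup.1 (hFle (Submodule.mem_span_singleton_self x))
      refine ⟨Ideal.span {p}, Ideal.span {q}, ⟨{p}, by simp⟩, ⟨{q}, by simp⟩,
        by simpa [Ideal.span_le] using hp, by simpa [Ideal.span_le] using hq, ?_⟩
      rw [Submodule.span_le, Set.singleton_subset_iff, ← e]
      exact add_mem (Submodule.mem_sup_left (Ideal.mem_span_singleton_self p))
        (Submodule.mem_sup_right (Ideal.mem_span_singleton_self q))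
    | sup M₁ M₂ _ _ h1 h2 =>
      obtain ⟨F1, F2, a, b, c, d, e⟩ := h1 (le_sup_left.trans hFle)
      obtain ⟨G1, G2, a', b', c', d', e'⟩ := h2 (le_sup_right.trans hFle)
      refine ⟨F1 ⊔ G1, F2 ⊔ G2, Submodule.FG.sup a a', Submodule.FG.sup b b', sup_le c c', sup_le d d', sup_le ?_ ?_⟩
      · exact e.trans (sup_le_sup le_sup_left le_sup_left)
      · exact e'.trans (sup_le_sup le_sup_right le_sup_right)
  obtain ⟨F1, F2, hF1, hF2, h1P, h2Q, hF12⟩ := this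
  have n1 : A0 ⊔ F1 ≠ ⊥ := fun h => hA00 (le_bot_iff.1 (h ▸ le_sup_left))
  have n2 : A0 ⊔ F2 ≠ ⊥ := fun h => hA00 (le_bot_iff.1 (h ▸ le_sup_left))
  have l1 : s.cl (A0 ⊔ F1) ≤ P := s.cl_le n1 (max_cl hP) (sup_le ((s.le_cl hA00).trans hAP) h1P)
  have l2 : s.cl (A0 ⊔ F2) ≤ Q := s.cl_le n2 (max_cl hQ) (sup_le ((s.le_cl hA00).trans hAQ) h2Q)
  refine hA4 (s.cl (A0 ⊔ F1)) (s.cl (A0 ⊔ F2)) (fun h => hP.1 (top_le_iff.1 (h ▸ l1)))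
    (fun h => hQ.1 (top_le_iff.1 (h ▸ l2))) (s.isStar_cl n1) (s.isStar_cl n2)
    ((ft_iff s).2 ⟨_, n1, Submodule.FG.sup hA0 hF1, rfl⟩) ((ft_iff s).2 ⟨_, n2, Submodule.FG.sup hA0 hF2, rfl⟩)
    (s.cl_mono hA00 le_sup_left) (s.cl_mono hA00 le_sup_left) ?_
  have hle : F ≤ s.cl (A0 ⊔ F1) ⊔ s.cl (A0 ⊔ F2) :=
    hF12.trans (sup_le_sup (le_sup_right.trans (s.le_cl n1)) (le_sup_right.trans (s.le_cl n2)))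
  rw [Ideal.add_eq_sup, star_eq_one_iff s (fun h => hF0 (le_bot_iff.1 (h ▸ hle))),
    Ideal.eq_top_iff_one]
  exact s.cl_mono hF0 hle h1F

theorem gen_mul {R : Type*} [CommRing R] [IsDomain R] {A B : Ideal R} (hA0 : A ≠ ⊥) (hA : A.FG)
    (QA : ∀ W : Ideal R, W.FG → A ≤ W → W.IsPrincipal)
    (QB : ∀ W : Ideal R, W.FG → B ≤ W → W.IsPrincipal) :
    ∀ W : Ideal R, W.FG → A * B ≤ W → W.IsPrincipal := by
  intro W hW hAB
  obtain ⟨c, hc⟩ := (QA (W ⊔ A) (Submodule.FG.sup hW hA) le_sup_right).principal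
  have hc0 : c ≠ 0 := by
    rintro rfl
    apply hA0
    rw [← le_bot_iff]
    refine le_sup_right.trans (hc.le.trans ?_)
    simp
  let f : R →ₗ[R] R := LinearMap.mulLeft R c
  have hf : Function.Injective f := fun a b h => mul_left_cancel₀ hc0 h
  have hWf : Submodule.map f (Submodule.comap f W) = W := by
    rw [Submodule.map_comap_eq, inf_eq_right]
    intro w hw
    have : w ∈ Submodule.span R {c} := hc ▸ Submodule.mem_sup_left hw
    obtain ⟨a, rfl⟩ := Submodule.mem_span_singleton.1 this
    exact ⟨a, by simp [f, mul_comm]⟩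
  have hU : (Submodule.comap f W).FG := by
    refine Submodule.fg_of_fg_map_injective f hf ?_
    rwa [hWf]
  obtain ⟨d, hd⟩ := (QB (Submodule.comap f W) hU (by
    intro b hb
    change c * b ∈ W
    have : c ∈ W ⊔ A := hc ▸ Submodule.mem_span_singleton_self c
    obtain ⟨w, hw, a, ha, rfl⟩ := Submodule.mem_sup.1 this
    rw [add_mul]
    exact add_mem (W.mul_mem_right _ hw) (hAB (Ideal.mul_mem_mul ha hb)))).principal
  refine ⟨⟨f d, ?_⟩⟩
  rw [← hWf, hd, Submodule.map_span]
  simp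

theorem map_eq {P : Ideal D} [P.IsPrime] {I : Ideal D} {j : D} (hj : j ∈ I)
    (h : ∀ i ∈ I, ∃ t, t ∉ P ∧ j ∣ t * i) :
    I.map (algebraMap D (Localization.AtPrime P)) =
      Ideal.span {algebraMap D (Localization.AtPrime P) j} := by
  apply le_antisymm
  · rw [Ideal.map_le_iff_le_comap]
    intro i hi
    obtain ⟨t, ht, r, hr⟩ := h i hi
    rw [Ideal.mem_comap, Ideal.mem_span_singleton]
    have hu : IsUnit (algebraMap D (Localization.AtPrime P) t) :=
      IsLocalization.map_units _ (⟨t, ht⟩ : P.primeCompl)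
    rw [← hu.dvd_mul_left, ← map_mul, hr, map_mul]
    exact dvd_mul_right _ _
  · rw [Ideal.span_le, Set.singleton_subset_iff]
    exact Ideal.mem_map_of_mem _ hj

theorem super_Q (hs : s.FiniteCharacter) {P : Ideal D} [P.IsPrime] (hP : s.IsMaxStarIdeal P)
    {A : Ideal D} (hA : s.IsSuperHomog A) :
    (A.map (algebraMap D (Localization.AtPrime P))).FG ∧
    ∀ W : Ideal (Localization.AtPrime P), W.FG →
      A.map (algebraMap D (Localization.AtPrime P)) ≤ W → W.IsPrincipal := by
  obtain ⟨⟨hA1, hA2, hA3, hA4⟩, hA5⟩ := hA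
  have hAcl := ((isStar_iff s).1 hA2)
  constructor
  · obtain ⟨j, hj, h⟩ := loc_gen hs hAcl.1 (by rw [hAcl.2]; exact hA5 A hA2 hA3 le_rfl) hP
    rw [hAcl.2] at h
    rw [map_eq hj h]
    exact ⟨{algebraMap D (Localization.AtPrime P) j}, by simp⟩
  · intro W hW hAW
    obtain ⟨A0, hA00, hA0, rfl⟩ := (ft_iff s).1 hA3
    have hmap : (W.comap (algebraMap D _)).map (algebraMap D (Localization.AtPrime P)) = W :=
      IsLocalization.map_under P.primeCompl _ W
    have hspan : Submodule.span (Localization.AtPrime P)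
      ((algebraMap D (Localization.AtPrime P)) '' (W.comap (algebraMap D _) : Set D)) = W := hmap
    obtain ⟨S, hS, hSW⟩ := (Submodule.fg_span_iff_fg_span_finset_subset _).1 (hspan.symm ▸ hW)
    classical
    obtain ⟨S', hS', rfl⟩ := Finset.subset_set_image_iff.1 hS
    rw [hspan] at hSW
    have hF : (A0 ⊔ Ideal.span (S' : Set D)).map (algebraMap D (Localization.AtPrime P)) = W := by
      rw [Ideal.map_sup, Ideal.map_span]
      have : Ideal.span ((algebraMap D (Localization.AtPrime P)) '' (S' : Set D)) = W := by
        rw [hSW, Finset.coe_image]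
      rw [this, sup_eq_right]
      exact (Ideal.map_mono (s.le_cl hA00)).trans hAW
    have n1 : A0 ⊔ Ideal.span (S' : Set D) ≠ ⊥ := fun h => hA00 (le_bot_iff.1 (h ▸ le_sup_left))
    obtain ⟨j, hj, h⟩ := loc_gen hs n1 (hA5 _ (s.isStar_cl n1)
      ((ft_iff s).2 ⟨_, n1, Submodule.FG.sup hA0 ⟨S', rfl⟩, rfl⟩) (s.cl_mono hA00 le_sup_left)) hP
    rw [← hF, map_eq hj (fun i hi => h i (s.le_cl n1 hi))]
    exact ⟨⟨_, rfl⟩⟩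

theorem prod_ne_bot {T : Multiset (Ideal D)} (hT : ∀ J ∈ T, s.IsSuperHomog J) : T.prod ≠ ⊥ := by
  rw [← Ideal.zero_eq_bot]
  refine Multiset.prod_ne_zero fun h => ?_
  exact (hT _ h).1.2.1.1 rfl

theorem prod_Q (hs : s.FiniteCharacter) {P : Ideal D} [P.IsPrime] (hP : s.IsMaxStarIdeal P)
    (T : Multiset (Ideal D)) (hT : ∀ J ∈ T, s.IsSuperHomog J) :
    ∀ W : Ideal (Localization.AtPrime P), W.FG →
      T.prod.map (algebraMap D (Localization.AtPrime P)) ≤ W → W.IsPrincipal := by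
  induction T using Multiset.induction_on with
  | empty =>
    intro W _ h
    rw [Multiset.prod_zero, Ideal.one_eq_top, Ideal.map_top, top_le_iff] at h
    rw [h]
    exact ⟨⟨1, by simp⟩⟩
  | cons A T ih =>
    rw [Multiset.prod_cons, Ideal.map_mul]
    have hA := hT A (by simp)
    have h1 := super_Q hs hP hA
    refine gen_mul ?_ h1.1 h1.2 (ih fun J hJ => hT J (by simp [hJ]))
    intro h
    rw [Ideal.map_eq_bot_iff_of_injective
      (IsLocalization.injective _ P.primeCompl_le_nonZeroDivisors)] at h
    exact hA.1.2.1.1 h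

theorem forward (hs : s.FiniteCharacter) (H : ∀ x : D, x ≠ 0 → ¬IsUnit x →
      ∃ T : Multiset (Ideal D), (∀ J ∈ T, s.IsSuperHomog J) ∧
        s.star ((T.prod : Ideal D) : FractionalIdeal D⁰ K) =
          ((Ideal.span {x} : Ideal D) : FractionalIdeal D⁰ K)) : s.IsIRKT := by
  have H' : ∀ x : D, x ≠ 0 → ¬IsUnit x →
      ∃ T : Multiset (Ideal D), (∀ J ∈ T, s.IsSuperHomog J) ∧ T.prod ≤ Ideal.span {x} := by
    intro x hx hu
    obtain ⟨T, hT, e⟩ := H x hx hu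
    refine ⟨T, hT, ?_⟩
    rw [star_eq_iff s (prod_ne_bot hT)] at e
    exact e ▸ s.le_cl (prod_ne_bot hT)
  refine ⟨?_, inter_eq hs, ?_, ?_⟩
  · intro P _ hP
    have hbez : IsBezout (Localization.AtPrime P) := by
      refine ⟨fun W hW => ?_⟩
      by_cases hW0 : W = ⊥
      · rw [hW0]; exact ⟨⟨0, by simp⟩⟩
      have hc : W.comap (algebraMap D (Localization.AtPrime P)) ≠ ⊥ := by
        intro h
        apply hW0
        rw [← IsLocalization.map_under P.primeCompl _ W, Ideal.under_def, h, Ideal.map_bot]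
      obtain ⟨x, hx, hx0⟩ := Submodule.exists_mem_ne_zero_of_ne_bot hc
      by_cases hu : IsUnit x
      · have : W = ⊤ := Ideal.eq_top_of_isUnit_mem _ hx (hu.map _)
        rw [this]
        exact ⟨⟨1, by simp⟩⟩
      obtain ⟨T, hT, hle⟩ := H' x hx0 hu
      refine prod_Q hs hP T hT W hW ?_
      rw [Ideal.map_le_iff_le_comap]
      refine hle.trans ?_
      rw [Ideal.span_le, Set.singleton_subset_iff]
      exact hx
    exact ValuationRing.iff_local_bezout_domain.2 ⟨inferInstance, hbez⟩
  · intro x hx hu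
    obtain ⟨T, hT, hle⟩ := H' x hx hu
    have : ∀ P, s.IsMaxStarIdeal P ∧ x ∈ P → ∃ J, J ∈ T ∧ J ≤ P := by
      rintro P ⟨hP, hxP⟩
      have := max_prime hP
      have h1 : T.prod ≤ P := hle.trans (by simpa [Ideal.span_le] using hxP)
      obtain ⟨J, hJ, h2⟩ := (Ideal.IsPrime.multiset_prod_le this).1 h1
      exact ⟨J, hJ, h2⟩
    classical
    refine Set.Finite.of_finite_image (f := fun P => if h : s.IsMaxStarIdeal P ∧ x ∈ P then
      (this P h).choose else ⊥) (T.toFinset.finite_toSet.subset ?_) ?_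
    · rintro _ ⟨P, hP, rfl⟩
      have hP' : s.IsMaxStarIdeal P ∧ x ∈ P := hP
      simp only [dif_pos hP', Finset.mem_coe, Multiset.mem_toFinset]
      exact (this P hP').choose_spec.1
    · intro P hP Q hQ e
      have hP' : s.IsMaxStarIdeal P ∧ x ∈ P := hP
      have hQ' : s.IsMaxStarIdeal Q ∧ x ∈ Q := hQ
      simp only [dif_pos hP', dif_pos hQ'] at e
      refine homog_unique hs (hT _ (this P hP').choose_spec.1).1 hP'.1 hQ'.1
        (this P hP').choose_spec.2 ?_
      rw [e]
      exact (this Q hQ').choose_spec.2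
  · intro P Q hP hQ hne L hL hL0 hle
    obtain ⟨x, hx, hx0⟩ := Submodule.exists_mem_ne_zero_of_ne_bot hL0
    have hu : ¬ IsUnit x := fun h => hL.ne_top (Ideal.eq_top_of_isUnit_mem _ hx h)
    obtain ⟨T, hT, hTx⟩ := H' x hx0 hu
    have h1 : T.prod ≤ L := hTx.trans (by simpa [Ideal.span_le] using hx)
    obtain ⟨J, hJ, h2⟩ := (Ideal.IsPrime.multiset_prod_le hL).1 h1
    exact hne (homog_unique hs (hT J hJ).1 hP hQ (h2.trans (hle.trans inf_le_left))
      (h2.trans (hle.trans inf_le_right)))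

/-- finitely generated ideals are locally principal at primes with valuation localization -/
theorem val_gen {P : Ideal D} [hp : P.IsPrime] (hV : ValuationRing (Localization.AtPrime P))
    {F : Ideal D} (hF : F.FG) : ∃ j ∈ F, ∃ t, t ∉ P ∧ ∀ i ∈ F, j ∣ t * i := by
  have comp : ∀ a b : D, ∃ t, t ∉ P ∧ (a ∣ t * b ∨ b ∣ t * a) := by
    have key : ∀ a b : D, ∀ c : Localization.AtPrime P, algebraMap D _ a * c = algebraMap D _ b →
        ∃ t, t ∉ P ∧ a ∣ t * b := by
      intro a b c hc
      obtain ⟨⟨r, t⟩, hrt⟩ := IsLocalization.surj P.primeCompl c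
      refine ⟨t, t.2, r, IsLocalization.injective (Localization.AtPrime P)
        P.primeCompl_le_nonZeroDivisors ?_⟩
      simp only at hrt
      rw [map_mul, map_mul, ← hc, ← hrt]
      ring
    intro a b
    obtain ⟨c, hc | hc⟩ := ValuationRing.cond (algebraMap D (Localization.AtPrime P) a)
      (algebraMap D _ b)
    · obtain ⟨t, ht, h⟩ := key _ _ _ hc
      exact ⟨t, ht, Or.inl h⟩
    · obtain ⟨t, ht, h⟩ := key _ _ _ hc
      exact ⟨t, ht, Or.inr h⟩
  induction F, hF using Submodule.fg_induction with
  | singleton x =>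
    refine ⟨x, Submodule.mem_span_singleton_self x, 1, fun h => hp.ne_top
      ((Ideal.eq_top_iff_one _).2 h), fun i hi => ?_⟩
    rw [one_mul]
    exact Ideal.mem_span_singleton.1 hi
  | sup M₁ M₂ _ _ h1 h2 =>
    have main : ∀ M₁ M₂ : Ideal D, ∀ j₁ ∈ M₁, ∀ t₁, t₁ ∉ P → (∀ i ∈ M₁, j₁ ∣ t₁ * i) →
        ∀ j₂ ∈ M₂, ∀ t₂, t₂ ∉ P → (∀ i ∈ M₂, j₂ ∣ t₂ * i) → ∀ t, t ∉ P → j₁ ∣ t * j₂ →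
        ∃ j ∈ M₁ ⊔ M₂, ∃ t, t ∉ P ∧ ∀ i ∈ M₁ ⊔ M₂, j ∣ t * i := by
      intro M₁ M₂ j₁ hj₁ t₁ ht₁ h₁ j₂ hj₂ t₂ ht₂ h₂ t ht hd
      refine ⟨j₁, Submodule.mem_sup_left hj₁, t * t₁ * t₂, ?_, ?_⟩
      · rw [hp.mul_mem_iff_mem_or_mem, hp.mul_mem_iff_mem_or_mem]
        tauto
      · intro i hi
        obtain ⟨a, ha, b, hb, rfl⟩ := Submodule.mem_sup.1 hi
        have e : t * t₁ * t₂ * (a + b) = t * t₂ * (t₁ * a) + t₁ * (t * (t₂ * b)) := by ring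
        rw [e]
        refine dvd_add (Dvd.dvd.mul_left (h₁ a ha) _) (Dvd.dvd.mul_left ?_ _)
        exact hd.trans (mul_dvd_mul_left _ (h₂ b hb))
    obtain ⟨j₁, hj₁, t₁, ht₁, h₁⟩ := h1
    obtain ⟨j₂, hj₂, t₂, ht₂, h₂⟩ := h2
    obtain ⟨t, ht, hd | hd⟩ := comp j₁ j₂
    · exact main _ _ j₁ hj₁ t₁ ht₁ h₁ j₂ hj₂ t₂ ht₂ h₂ t ht hd
    · rw [sup_comm]
      exact main _ _ j₂ hj₂ t₂ ht₂ h₂ j₁ hj₁ t₁ ht₁ h₁ t ht hd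

theorem val_gen' (H : s.IsIRKT) {P : Ideal D} (hP : s.IsMaxStarIdeal P)
    {F : Ideal D} (hF0 : F ≠ ⊥) (hF : F.FG) :
    ∃ j ∈ F, j ≠ 0 ∧ ∃ t, t ∉ P ∧ ∀ i ∈ s.cl F, j ∣ t * i := by
  have := max_prime hP
  obtain ⟨j, hj, t, ht, h⟩ := val_gen (H.1 P hP) hF
  have hj0 : j ≠ 0 := by
    rintro rfl
    apply hF0
    rw [← le_bot_iff]
    intro i hi
    have h1 := h i hi
    rw [zero_dvd_iff, mul_eq_zero] at h1
    rcases h1 with rfl | h1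
    · exact absurd (zero_mem _) ht
    · exact h1
  refine ⟨j, hj, hj0, t, ht, fun i hi => ?_⟩
  have := s.mul_cl' hF0 (J := Ideal.span {j}) (by simpa using hj0) t
    (fun i hi => Ideal.mem_span_singleton.2 (h i hi)) i hi
  rw [s.cl_span hj0] at this
  exact Ideal.mem_span_singleton.1 this

theorem cl_local (hs : s.FiniteCharacter) (H : s.IsIRKT) {P : Ideal D} (hP : s.IsMaxStarIdeal P)
    {I : Ideal D} (hI : I ≠ ⊥) {d : D} (hd : d ∈ s.cl I) : ∃ t, t ∉ P ∧ t * d ∈ I := by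
  obtain ⟨F, hF0, hF, hFI, hdF⟩ := fin_cl hs hI hd
  obtain ⟨j, hj, -, t, ht, h⟩ := val_gen' H hP hF0 hF
  exact ⟨t, ht, I.mem_of_dvd (h d hdF) (hFI hj)⟩

theorem fg_inv (hs : s.FiniteCharacter) (H : s.IsIRKT) {F : Ideal D} (hF0 : F ≠ ⊥) (hF : F.FG) :
    s.StarInvertible (s.cl F) := by
  rw [inv_iff hs (s.cl_ne hF0)]
  intro P hP
  obtain ⟨j, hj, hj0, t, ht, h⟩ := val_gen' H hP hF0 hF
  have hj0' : algebraMap D K j ≠ 0 := by simpa using hj0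
  refine ⟨j, s.le_cl hF0 hj, algebraMap D K t / algebraMap D K j, fun a ha => ?_, t, ht, ?_⟩
  · obtain ⟨d, hd⟩ := h a ha
    refine ⟨d, ?_⟩
    rw [div_mul_eq_mul_div, ← map_mul, hd, map_mul]
    field_simp
  · field_simp

/-- `x D_P ∩ D` -/
def locI (x : D) (P : Ideal D) (hP : P.IsPrime) : Ideal D where
  carrier := {d | ∃ t, t ∉ P ∧ x ∣ t * d}
  zero_mem' := ⟨1, fun h => hP.ne_top ((Ideal.eq_top_iff_one _).2 h), by simp⟩
  add_mem' := by
    rintro a b ⟨t, ht, h⟩ ⟨u, hu, h'⟩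
    refine ⟨t * u, fun h => (hP.mem_or_mem h).elim ht hu, ?_⟩
    have e : t * u * (a + b) = u * (t * a) + t * (u * b) := by ring
    rw [e]
    exact dvd_add (h.mul_left _) (h'.mul_left _)
  smul_mem' := by
    rintro c a ⟨t, ht, h⟩
    refine ⟨t, ht, ?_⟩
    rw [smul_eq_mul, mul_left_comm]
    exact h.mul_left _

open Classical in
/-- `x D_P ∩ D`, total version -/
noncomputable def locA (x : D) (P : Ideal D) : Ideal D :=
  if hP : P.IsPrime then locI x P hP else ⊤

theorem mem_locA {x : D} {P : Ideal D} (hP : P.IsPrime) {d : D} :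
    d ∈ locA x P ↔ ∃ t, t ∉ P ∧ x ∣ t * d := by
  rw [locA, dif_pos hP]; rfl

theorem self_mem_locA (x : D) {P : Ideal D} : x ∈ locA x P := by
  by_cases hP : P.IsPrime
  · exact (mem_locA hP).2 ⟨1, fun h => hP.ne_top ((Ideal.eq_top_iff_one _).2 h), by simp⟩
  · rw [locA, dif_neg hP]; trivial

theorem locA_le {x : D} {P : Ideal D} (hP : P.IsPrime) (hx : x ∈ P) : locA x P ≤ P := by
  intro d hd
  obtain ⟨t, ht, h⟩ := (mem_locA hP).1 hd
  exact (hP.mem_or_mem (P.mem_of_dvd h hx)).resolve_left ht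

theorem locA_not_le (H : s.IsIRKT) {x : D} (hx0 : x ≠ 0) {P Q : Ideal D} (hP : s.IsMaxStarIdeal P)
    (hQ : s.IsMaxStarIdeal Q) (hne : P ≠ Q) : ∃ y ∈ locA x P, y ∉ Q := by
  have hp := max_prime hP
  have hq := max_prime hQ
  by_contra hcon
  push Not at hcon
  have hdisj : Disjoint (Ideal.span {x} : Set D) ((P.primeCompl ⊔ Q.primeCompl : Submonoid D) : Set D) := by
    rw [Set.disjoint_left]
    intro y hy hy'
    obtain ⟨p, hpP, q, hqQ, rfl⟩ := Submonoid.mem_sup.1 hy'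
    exact hqQ (hcon q ((mem_locA hp).2 ⟨p, hpP, Ideal.mem_span_singleton.1 hy⟩))
  obtain ⟨L, hL, hxL, hLd⟩ := Ideal.exists_le_prime_disjoint _ _ hdisj
  rw [Set.disjoint_left] at hLd
  refine H.2.2.2 P Q hP hQ hne L hL (ne_bot_of_mem (hxL (Ideal.mem_span_singleton_self x)) hx0)
    (le_inf ?_ ?_)
  · intro y hy
    by_contra h
    exact hLd hy (Submonoid.mem_sup_left (show y ∈ P.primeCompl from h))
  · intro y hy
    by_contra h
    exact hLd hy (Submonoid.mem_sup_right (show y ∈ Q.primeCompl from h))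

theorem locA_super (hs : s.FiniteCharacter) (H : s.IsIRKT) {x : D} (hx0 : x ≠ 0)
    (hu : ¬ IsUnit x) {P : Ideal D} (hP : s.IsMaxStarIdeal P) (hxP : x ∈ P) :
    s.IsSuperHomog (locA x P) := by
  have hp := max_prime hP
  have hA0 : locA x P ≠ ⊥ := ne_bot_of_mem (self_mem_locA x) hx0
  have hcl : s.cl (locA x P) = locA x P := by
    refine le_antisymm (fun d hd => ?_) (s.le_cl hA0)
    obtain ⟨t, ht, h⟩ := cl_local hs H hP hA0 hd
    obtain ⟨u, hu, h'⟩ := (mem_locA hp).1 h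
    refine (mem_locA hp).2 ⟨u * t, fun h => (hp.mem_or_mem h).elim hu ht, ?_⟩
    rwa [mul_assoc]
  have huniq : ∀ Q, s.IsMaxStarIdeal Q → locA x P ≤ Q → P = Q := by
    intro Q hQ hle
    by_contra hne
    obtain ⟨y, hy, hyQ⟩ := locA_not_le H hx0 hP hQ hne
    exact hyQ (hle hy)
  have hft : s.IsFiniteTypeStarIdeal (locA x P) := by
    have hy : ∀ Q, ∃ y ∈ locA x P, s.IsMaxStarIdeal Q → P ≠ Q → y ∉ Q := by
      intro Q
      by_cases h : s.IsMaxStarIdeal Q ∧ P ≠ Q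
      · obtain ⟨y, hy, hyQ⟩ := locA_not_le H hx0 hP h.1 h.2
        exact ⟨y, hy, fun _ _ => hyQ⟩
      · exact ⟨x, self_mem_locA x, fun a b => absurd ⟨a, b⟩ h⟩
    choose y hyA hyQ using hy
    have hfin := H.2.2.1 x hx0 hu
    have hfin' : (insert x (y '' {P : Ideal D | s.IsMaxStarIdeal P ∧ x ∈ P})).Finite :=
      (hfin.image y).insert x
    have hxF : x ∈ Ideal.span (insert x (y '' {P : Ideal D | s.IsMaxStarIdeal P ∧ x ∈ P})) :=
      Ideal.subset_span (Set.mem_insert _ _)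
    have hF0 := ne_bot_of_mem hxF hx0
    refine (ft_iff s).2 ⟨_, hF0, Submodule.fg_span hfin', ?_⟩
    apply le_antisymm
    · refine s.cl_le hF0 hcl ?_
      rw [Ideal.span_le, Set.insert_subset_iff]
      refine ⟨self_mem_locA x, ?_⟩
      rintro _ ⟨Q, -, rfl⟩
      exact hyA Q
    · intro d hd
      refine mem_cl_of_local hs hF0 fun Q hQ => ?_
      by_cases hPQ : P = Q
      · subst hPQ
        obtain ⟨t, ht, h⟩ := (mem_locA hp).1 hd
        exact ⟨t, ht, Ideal.mem_of_dvd _ h hxF⟩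
      by_cases hxQ : x ∈ Q
      · refine ⟨y Q, hyQ Q hQ hPQ, Ideal.mul_mem_right _ _ (Ideal.subset_span
          (Set.mem_insert_of_mem _ ⟨Q, ⟨hQ, hxQ⟩, rfl⟩))⟩
      · exact ⟨x, hxQ, Ideal.mul_mem_right _ _ hxF⟩
  refine ⟨⟨fun h => hP.1 (top_le_iff.1 (h ▸ locA_le hp hxP)), (isStar_iff s).2 ⟨hA0, hcl⟩, hft, ?_⟩, ?_⟩
  · intro J J' h1 h1' h2 h2' _ _ h3 h3' h
    have hlP : ∀ J : Ideal D, J ≠ ⊤ → s.IsStarIdeal J → locA x P ≤ J → J ≤ P := by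
      intro J h1 h2 h3
      rw [isStar_iff] at h2
      obtain ⟨Q, hQ, hJQ⟩ := exists_max hs h2.1 (h2.2.symm ▸ h1)
      rw [huniq Q hQ (h3.trans hJQ)]
      exact hJQ
    have hJJ : J ⊔ J' ≠ ⊥ := fun h => h2.1 (le_bot_iff.1 (h ▸ le_sup_left))
    rw [Ideal.add_eq_sup, star_eq_one_iff s hJJ, cl_top_iff hs hJJ] at h
    exact h P hP (sup_le (hlP J h1 h2 h3) (hlP J' h1' h2' h3'))
  · intro J _ hJ _
    obtain ⟨F, hF0, hF, rfl⟩ := (ft_iff s).1 hJ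
    exact fg_inv hs H hF0 hF

theorem backward (hs : s.FiniteCharacter) (H : s.IsIRKT) (x : D) (hx0 : x ≠ 0) (hu : ¬IsUnit x) :
      ∃ T : Multiset (Ideal D), (∀ J ∈ T, s.IsSuperHomog J) ∧
        s.star ((T.prod : Ideal D) : FractionalIdeal D⁰ K) =
          ((Ideal.span {x} : Ideal D) : FractionalIdeal D⁰ K) := by
  classical
  have hfin := H.2.2.1 x hx0 hu
  have hT : ∀ J ∈ (hfin.toFinset.val.map (locA x)), s.IsSuperHomog J := by
    intro J hJ
    obtain ⟨P, hP, rfl⟩ := Multiset.mem_map.1 hJ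
    have hP' : s.IsMaxStarIdeal P ∧ x ∈ P := hfin.mem_toFinset.1 hP
    exact locA_super hs H hx0 hu hP'.1 hP'.2
  refine ⟨hfin.toFinset.val.map (locA x), hT, ?_⟩
  have hT0 := prod_ne_bot hT
  rw [star_eq_iff s hT0]
  change s.cl (∏ P ∈ hfin.toFinset, locA x P) = _
  change (∏ P ∈ hfin.toFinset, locA x P) ≠ ⊥ at hT0
  have hxs : Ideal.span {x} ≠ ⊥ := by simpa using hx0
  apply le_antisymm
  · refine s.cl_le hT0 (s.cl_span hx0) ?_
    intro d hd
    rw [← s.cl_span hx0]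
    refine mem_cl_of_local hs hxs fun Q hQ => ?_
    by_cases hxQ : x ∈ Q
    · have : (∏ P ∈ hfin.toFinset, locA x P) ≤ locA x Q :=
        Ideal.le_of_dvd (Finset.dvd_prod_of_mem _ (hfin.mem_toFinset.2 ⟨hQ, hxQ⟩))
      obtain ⟨t, ht, h⟩ := (mem_locA (max_prime hQ)).1 (this hd)
      exact ⟨t, ht, Ideal.mem_span_singleton.2 h⟩
    · exact ⟨x, hxQ, Ideal.mem_span_singleton.2 (dvd_mul_right _ _)⟩
  · rw [Ideal.span_le, Set.singleton_subset_iff]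
    refine mem_cl_of_local hs hT0 fun Q hQ => ?_
    have hq := max_prime hQ
    have hy : ∀ P ∈ hfin.toFinset.erase Q, ∃ y ∈ locA x P, y ∉ Q := by
      intro P hP
      rw [Finset.mem_erase] at hP
      have hP' : s.IsMaxStarIdeal P ∧ x ∈ P := hfin.mem_toFinset.1 hP.2
      exact locA_not_le H hx0 hP'.1 hQ hP.1
    choose! y hyA hyQ using hy
    have hprod : ∏ P ∈ hfin.toFinset.erase Q, y P ∈ ∏ P ∈ hfin.toFinset.erase Q, locA x P :=
      Ideal.prod_mem_prod hyA
    have hprod' : ∏ P ∈ hfin.toFinset.erase Q, y P ∉ Q := by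
      rw [hq.prod_mem_iff]
      push Not
      exact hyQ
    refine ⟨_, hprod', ?_⟩
    by_cases hxQ : x ∈ Q
    · rw [← Finset.prod_erase_mul _ _ (hfin.mem_toFinset.2 ⟨hQ, hxQ⟩)]
      exact Ideal.mul_mem_mul hprod (self_mem_locA x)
    · rw [Finset.erase_eq_of_notMem (by simp [hxQ])] at hprod ⊢
      exact Ideal.mul_mem_right _ _ hprod

end Aux

end StarOperation

/-- `D` is a `*`-super SH domain iff `D` is a `*`-independent ring of
Krull type. -/
theorem superSH_iff_IRKT {D K : Type*} [CommRing D] [IsDomain D] [Field K]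
    [Algebra D K] [IsFractionRing D K] (s : StarOperation D K) (hs : s.FiniteCharacter) :
    (∀ x : D, x ≠ 0 → ¬IsUnit x →
      ∃ T : Multiset (Ideal D), (∀ J ∈ T, s.IsSuperHomog J) ∧
        s.star ((T.prod : Ideal D) : FractionalIdeal D⁰ K) =
          ((Ideal.span {x} : Ideal D) : FractionalIdeal D⁰ K)) ↔
    s.IsIRKT := by
  exact ⟨StarOperation.forward hs, fun H => StarOperation.backward hs H⟩
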